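/- arXiv:2412.13355 — 2 statements merged into one kernel-verified Lean document; each statement's English description precedes it below -/
import Mathlib

section
/- There exists an absolute constant c > 0 such that for every real x ≥ 3 and every positive integer m with m ≤ (log x)/log 2, one has #{n ∈ ℕ : n ≤ x, Ω(n) = m} ≥ c · x/(2^m · log x). -/
open Real

/-- `Ω(n)`, the number of prime factors of `n` counted with multiplicity. -/
def bigOmega (n : ℕ) : ℕ := n.primeFactorsList.length

lemma aux_psi (y : ℝ) (hy : 2 ≤ y) : y / 16 ≤ (Nat.primeCounting ⌊y⌋₊ : ℝ) * Real.log y := by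
  refine le_trans ?_ (Chebyshev.psi_le_primeCounting_mul_log' y)
  rw [Chebyshev.psi_eq_psi_coe_floor]
  refine le_trans ?_ (Chebyshev.psi_ge _)
  have h2 : 2 ≤ ⌊y⌋₊ := Nat.le_floor (by exact_mod_cast hy)
  have h3 : y < ⌊y⌋₊ + 1 := Nat.lt_floor_add_one y
  have h2' : (2 : ℝ) ≤ ⌊y⌋₊ := by exact_mod_cast h2
  generalize (⌊y⌋₊ : ℝ) = n at *
  have h4 : Real.log (n + 1) = 2 * Real.log 2 + Real.log ((n + 1) / 4) := by
    rw [Real.log_div (by linarith) (by norm_num), show (4 : ℝ) = 2 ^ 2 by norm_num, Real.log_pow]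
    push_cast; ring
  have h5 := Real.log_le_sub_one_of_pos (show 0 < (n + 1) / 4 by linarith)
  have h6 := Real.log_two_gt_d9
  nlinarith

theorem nicolas_lower_bound :
    ∃ c : ℝ, 0 < c ∧
      ∀ (x : ℝ) (m : ℕ), 3 ≤ x → 0 < m → (m : ℝ) ≤ Real.log x / Real.log 2 →
        c * x / (2 ^ m * Real.log x) ≤ ({n : ℕ | (n : ℝ) ≤ x ∧ bigOmega n = m}.ncard : ℝ) := by
  refine ⟨1 / 8, by norm_num, ?_⟩
  intro x m hx hm hmx
  obtain ⟨k, rfl⟩ : ∃ k, m = k + 1 := ⟨m - 1, by omega⟩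
  have hl2 : 0 < Real.log 2 := Real.log_pos (by norm_num)
  have hlx : 0 < Real.log x := Real.log_pos (by linarith)
  have hpow : (2 : ℝ) ^ (k + 1) ≤ x := by
    rw [le_div_iff₀ hl2, ← Real.log_pow] at hmx
    exact (Real.log_le_log_iff (by positivity) (by linarith)).1 hmx
  have h2k : (0 : ℝ) < 2 ^ k := by positivity
  have h2k1 : (1 : ℝ) ≤ 2 ^ k := one_le_pow₀ (by norm_num)
  set y : ℝ := x / 2 ^ k with hy
  have hxy : x = y * 2 ^ k := by rw [hy]; field_simp
  have hy2 : 2 ≤ y := by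
    rw [hy, le_div_iff₀ h2k]; rw [pow_succ] at hpow; linarith
  have hyx : y ≤ x := div_le_self (by linarith) h2k1
  have hpsi := aux_psi y hy2
  have hlog : Real.log y ≤ Real.log x := Real.log_le_log (by linarith) hyx
  have hcount : Nat.primeCounting ⌊y⌋₊ ≤ {n : ℕ | (n : ℝ) ≤ x ∧ bigOmega n = k + 1}.ncard := by
    have hfin : {n : ℕ | (n : ℝ) ≤ x ∧ bigOmega n = k + 1}.Finite :=
      (Set.finite_Iic ⌊x⌋₊).subset fun n hn => Nat.le_floor hn.1
    have hinj : Function.Injective (fun p : ℕ => 2 ^ k * p) := fun a b h =>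
      Nat.eq_of_mul_eq_mul_left (by positivity) h
    rw [Nat.primeCounting, Nat.primeCounting', Nat.count_eq_card_filter_range,
      ← Finset.card_image_of_injective _ hinj, ← Set.ncard_coe_finset]
    refine Set.ncard_le_ncard ?_ hfin
    intro n hn
    simp only [Finset.coe_image, Set.mem_image, Finset.mem_coe, Finset.mem_filter,
      Finset.mem_range] at hn
    obtain ⟨p, ⟨hp1, hp⟩, rfl⟩ := hn
    have hpy : (p : ℝ) ≤ y := (Nat.le_floor_iff (by linarith)).1 (by omega)
    refine ⟨?_, ?_⟩
    · push_cast
      rw [hxy]; nlinarith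
    · rw [bigOmega, (Nat.perm_primeFactorsList_mul (by positivity) hp.ne_zero).length_eq,
        List.length_append, Nat.Prime.primeFactorsList_pow Nat.prime_two,
        Nat.primeFactorsList_prime hp]
      simp
  have hc : (Nat.primeCounting ⌊y⌋₊ : ℝ) ≤
      ({n : ℕ | (n : ℝ) ≤ x ∧ bigOmega n = k + 1}.ncard : ℝ) := by exact_mod_cast hcount
  refine le_trans ?_ hc
  rw [div_le_iff₀ (by positivity)]
  have h7 : y / 16 ≤ (Nat.primeCounting ⌊y⌋₊ : ℝ) * Real.log x :=
    hpsi.trans (mul_le_mul_of_nonneg_left hlog (by positivity))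
  calc 1 / 8 * x = y / 16 * 2 ^ (k + 1) := by rw [hxy]; ring
    _ ≤ ((Nat.primeCounting ⌊y⌋₊ : ℝ) * Real.log x) * 2 ^ (k + 1) :=
      mul_le_mul_of_nonneg_right h7 (by positivity)
    _ = _ := by ring
end

section
/- Let y ≥ 1 be a real number and let k, w be positive integers. Let A_w(y) = {a ∈ ℕ : 1 ≤ a ≤ y, Ω(a) = w}, and let T_k(w, y) denote the number of 2k-tuples (a_1, …, a_k, b_1, …, b_k) with all a_i, b_j ∈ A_w(y) and a_1 ⋯ a_k = b_1 ⋯ b_k. Then T_k(w, y) ≤ ((kw)! / (w!)^k) · (#A_w(y))^k. -/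
open Real

/-- `A_w(y) = {a ∈ ℕ : 1 ≤ a ≤ y, Ω(a) = w}`. -/
def Aset (w : ℕ) (y : ℝ) : Set ℕ := {a : ℕ | 1 ≤ a ∧ (a : ℝ) ≤ y ∧ bigOmega a = w}

lemma bigOmega_mul {a b : ℕ} (ha : a ≠ 0) (hb : b ≠ 0) :
    bigOmega (a * b) = bigOmega a + bigOmega b := by
  unfold bigOmega
  rw [(Nat.perm_primeFactorsList_mul ha hb).length_eq, List.length_append]

/-- The divisors of `n` with exactly `w` prime factors number at most `choose (Ω n) w`. -/
lemma divisors_card_le (n w : ℕ) (hn : n ≠ 0) :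
    (n.divisors.filter (fun d => bigOmega d = w)).card ≤ (bigOmega n).choose w := by
  classical
  have h1 : (n.divisors.filter (fun d => bigOmega d = w)).card ≤
      (Multiset.powersetCard w (n.primeFactorsList : Multiset ℕ)).toFinset.card := by
    apply Finset.card_le_card_of_injOn (fun d => (d.primeFactorsList : Multiset ℕ))
    · intro d hd
      simp only [Finset.coe_filter, Nat.mem_divisors, Set.mem_ofPred_eq] at hd
      simp only [Finset.mem_coe, Multiset.mem_toFinset, Multiset.mem_powersetCard]
      refine ⟨?_, ?_⟩
      · exact (Multiset.coe_le).2 ((Nat.primeFactorsList_sublist_of_dvd hd.1.1 hn).subperm)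
      · simpa [bigOmega] using hd.2
    · intro d hd e he hde
      simp only [Finset.coe_filter, Nat.mem_divisors, Set.mem_ofPred_eq] at hd he
      have hd0 : d ≠ 0 := fun h => hn (by simpa [h] using hd.1.1)
      have he0 : e ≠ 0 := fun h => hn (by simpa [h] using he.1.1)
      exact Nat.eq_of_perm_primeFactorsList hd0 he0 (Multiset.coe_eq_coe.1 hde)
  refine h1.trans ((Multiset.toFinset_card_le _).trans ?_)
  rw [Multiset.card_powersetCard]
  rfl

lemma factorizations_bound (w : ℕ) (k : ℕ) : ∀ n : ℕ, n ≠ 0 → bigOmega n = k * w →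
    ∃ F : Finset (Fin k → ℕ), (∀ b : Fin k → ℕ, (∀ i, bigOmega (b i) = w) → ∏ i, b i = n → b ∈ F) ∧
      F.card * w.factorial ^ k ≤ (k * w).factorial := by
  classical
  induction k with
  | zero =>
    intro n _ _
    refine ⟨Finset.univ, fun b _ _ => Finset.mem_univ _, ?_⟩
    simp
  | succ k ih =>
    intro n hn hO
    have key : ∀ d : ℕ, ∃ F : Finset (Fin k → ℕ), d ∈ n.divisors.filter (fun d => bigOmega d = w) →
        (∀ b : Fin k → ℕ, (∀ i, bigOmega (b i) = w) → ∏ i, b i = n / d → b ∈ F) ∧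
        F.card * w.factorial ^ k ≤ (k * w).factorial := by
      intro d
      by_cases hd : d ∈ n.divisors.filter (fun d => bigOmega d = w)
      · have hd' := hd
        simp only [Finset.mem_filter, Nat.mem_divisors] at hd'
        obtain ⟨⟨⟨e, rfl⟩, -⟩, hdw⟩ := hd'
        have hd0 : d ≠ 0 := left_ne_zero_of_mul hn
        have he0 : e ≠ 0 := right_ne_zero_of_mul hn
        rw [bigOmega_mul hd0 he0, hdw] at hO
        obtain ⟨F, hF⟩ := ih e he0 (by rw [Nat.succ_mul] at hO; omega)
        refine ⟨F, fun _ => ?_⟩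
        rwa [Nat.mul_div_cancel_left _ (Nat.pos_of_ne_zero hd0)]
      · exact ⟨∅, fun h => absurd h hd⟩
    choose F hF using key
    refine ⟨(n.divisors.filter (fun d => bigOmega d = w)).biUnion
      (fun d => (F d).image (fun b => (Fin.cons d b : Fin (k+1) → ℕ))), ?_, ?_⟩
    · intro b hb hprod
      rw [Fin.prod_univ_succ] at hprod
      have hb0 : b 0 ≠ 0 := fun h => hn (by rw [← hprod, h, zero_mul])
      have hmem : b 0 ∈ n.divisors.filter (fun d => bigOmega d = w) := by
        simp only [Finset.mem_filter, Nat.mem_divisors]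
        exact ⟨⟨⟨_, hprod.symm⟩, hn⟩, hb 0⟩
      refine Finset.mem_biUnion.2 ⟨b 0, hmem, Finset.mem_image.2 ⟨Fin.tail b, ?_, Fin.cons_self_tail b⟩⟩
      refine (hF _ hmem).1 _ (fun i => hb _) ?_
      rw [← hprod, Nat.mul_div_cancel_left _ (Nat.pos_of_ne_zero hb0)]
      rfl
    · have hD := divisors_card_le n w hn
      rw [hO] at hD
      have h2 : ((n.divisors.filter (fun d => bigOmega d = w)).biUnion
          (fun d => (F d).image (fun b => (Fin.cons d b : Fin (k+1) → ℕ)))).card * w.factorial ^ k ≤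
          (n.divisors.filter (fun d => bigOmega d = w)).card * (k * w).factorial := by
        refine (Nat.mul_le_mul_right _ Finset.card_biUnion_le).trans ?_
        rw [Finset.sum_mul, ← smul_eq_mul (a := Finset.card _)]
        refine Finset.sum_le_card_nsmul _ _ _ (fun d hd => ?_)
        exact (Nat.mul_le_mul_right _ Finset.card_image_le).trans (hF d hd).2
      have h3 : ((k+1) * w).choose w * w.factorial * (k * w).factorial = ((k+1) * w).factorial := by
        have := Nat.choose_mul_factorial_mul_factorial (n := (k+1)*w) (k := w)
          (Nat.le_mul_of_pos_left _ (Nat.succ_pos k))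
        rwa [show (k+1) * w - w = k * w by rw [Nat.succ_mul]; omega] at this
      rw [← h3, pow_succ, ← mul_assoc]
      calc _ ≤ _ := Nat.mul_le_mul_right _ h2
        _ ≤ _ := Nat.mul_le_mul_right _ (Nat.mul_le_mul_right _ hD)
        _ = _ := by ring

lemma bigOmega_prod (w : ℕ) (k : ℕ) (a : Fin k → ℕ) (h0 : ∀ i, a i ≠ 0)
    (h : ∀ i, bigOmega (a i) = w) : bigOmega (∏ i, a i) = k * w := by
  induction k with
  | zero => simp [bigOmega]
  | succ k ih =>
    rw [Fin.prod_univ_succ, bigOmega_mul (h0 0) (Finset.prod_ne_zero_iff.2 fun i _ => h0 _), h 0,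
      ih _ (fun i => h0 _) (fun i => h _)]
    ring

lemma Aset_finite (w : ℕ) (y : ℝ) : (Aset w y).Finite :=
  (Set.finite_Iic ⌊y⌋₊).subset fun _ ha => Nat.le_floor ha.2.1

theorem Tk_multinomial_bound (y : ℝ) (hy : 1 ≤ y) (k w : ℕ) (hk : 0 < k) (hw : 0 < w) :
    ({p : (Fin k → ℕ) × (Fin k → ℕ) |
        (∀ i, p.1 i ∈ Aset w y) ∧ (∀ i, p.2 i ∈ Aset w y) ∧
          ∏ i, p.1 i = ∏ i, p.2 i}.ncard : ℝ)
      ≤ ((k * w).factorial : ℝ) / (w.factorial : ℝ) ^ k * ((Aset w y).ncard : ℝ) ^ k := by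
  classical
  set A := (Aset_finite w y).toFinset with hA
  have hAm : ∀ a, a ∈ A ↔ a ∈ Aset w y := fun a => by simp [hA]
  have hAc : (Aset w y).ncard = A.card := Set.ncard_eq_toFinset_card _ (Aset_finite w y)
  have key : ∀ a : Fin k → ℕ, ∃ F : Finset (Fin k → ℕ), a ∈ Fintype.piFinset (fun _ => A) →
      (∀ b : Fin k → ℕ, (∀ i, bigOmega (b i) = w) → ∏ i, b i = ∏ i, a i → b ∈ F) ∧
      F.card * w.factorial ^ k ≤ (k * w).factorial := by
    intro a
    by_cases ha : a ∈ Fintype.piFinset (fun _ => A)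
    · have ha' : ∀ i, a i ∈ Aset w y := fun i => (hAm _).1 (Fintype.mem_piFinset.1 ha i)
      have h0 : ∀ i, a i ≠ 0 := fun i => Nat.one_le_iff_ne_zero.1 (ha' i).1
      obtain ⟨F, hF⟩ := factorizations_bound w k (∏ i, a i)
        (Finset.prod_ne_zero_iff.2 fun i _ => h0 i) (bigOmega_prod w k a h0 fun i => (ha' i).2.2)
      exact ⟨F, fun _ => hF⟩
    · exact ⟨∅, fun h => absurd h ha⟩
  choose F hF using key
  set G := (Fintype.piFinset (fun _ : Fin k => A)).biUnion
    (fun a => (F a).image (fun b => (a, b))) with hG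
  have hsub : {p : (Fin k → ℕ) × (Fin k → ℕ) |
        (∀ i, p.1 i ∈ Aset w y) ∧ (∀ i, p.2 i ∈ Aset w y) ∧
          ∏ i, p.1 i = ∏ i, p.2 i} ⊆ (G : Set _) := by
    rintro ⟨a, b⟩ ⟨ha, hb, hab⟩
    have hm : a ∈ Fintype.piFinset (fun _ => A) :=
      Fintype.mem_piFinset.2 fun i => (hAm _).2 (ha i)
    exact Finset.mem_coe.2 (Finset.mem_biUnion.2 ⟨a, hm, Finset.mem_image.2
      ⟨b, (hF a hm).1 b (fun i => (hb i).2.2) hab.symm, rfl⟩⟩)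
  have hle := Set.ncard_le_ncard hsub G.finite_toSet
  rw [Set.ncard_coe_finset] at hle
  have hGc : G.card * w.factorial ^ k ≤ A.card ^ k * (k * w).factorial := by
    refine (Nat.mul_le_mul_right _ Finset.card_biUnion_le).trans ?_
    have hc : (Fintype.piFinset (fun _ : Fin k => A)).card = A.card ^ k := by simp
    rw [Finset.sum_mul, ← hc, ← smul_eq_mul (a := Finset.card _)]
    refine Finset.sum_le_card_nsmul _ _ _ (fun d hd => ?_)
    exact (Nat.mul_le_mul_right _ Finset.card_image_le).trans (hF d hd).2
  have hfin := (Nat.mul_le_mul_right (w.factorial ^ k) hle).trans hGc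
  have hpos : (0 : ℝ) < (w.factorial : ℝ) ^ k := by positivity
  rw [hAc, div_mul_eq_mul_div, le_div_iff₀ hpos, mul_comm ((k * w).factorial : ℝ)]
  exact_mod_cast hfin
end
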